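/- Let B be a supersoluble brace. Then B has a finite chain of ideals {0} = I_{0,0} ≤ I_{0,1} ≤ … ≤ I_{0,ℓ} = I_{1,0} ≤ I_{1,1} ≤ … ≤ I_{1,m} = I_{2,0} ≤ I_{2,1} ≤ … ≤ I_{2,n} = B such that: (i) |I_{0,i+1}/I_{0,i}| is an odd prime for all 0 ≤ i < ℓ; (ii) |I_{0,i+1}/I_{0,i}| ≥ |I_{0,i+2}/I_{0,i+1}| for all 0 ≤ i < ℓ−1; (iii) I_{1,i+1}/I_{1,i} ⊆ Soc(B/I_{1,i}) and (I_{1,i+1}/I_{1,i},+) is infinite cyclic for all 0 ≤ i < m; (iv) |I_{2,i+1}/I_{2,i}| = 2 for all 0 ≤ i < n. -/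

import Mathlib

/-- A (skew left) brace: a set with an additive group structure (not necessarily abelian)
and a multiplicative group structure sharing the same identity, satisfying the skew
distributive law `a * (b + c) = a * b + -a + a * c`. -/
class SkewBrace (B : Type*) extends AddGroup B, Group B where
  one_eq_zero : (1 : B) = (0 : B)
  skew_distrib : ∀ a b c : B, a * (b + c) = a * b + -a + a * c

/-- A group is supersoluble if it has a finite chain of normal subgroups with all
factors cyclic. -/
def Group.IsSupersoluble (G : Type*) [Group G] : Prop :=
  ∃ (n : ℕ) (H : ℕ → Subgroup G),
    H 0 = ⊥ ∧ H n = ⊤ ∧ (∀ i, (H i).Normal) ∧ (∀ i, i < n → H i ≤ H (i + 1)) ∧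
    ∀ i, i < n → ∃ x ∈ H (i + 1), ∀ y ∈ H (i + 1), ∃ k : ℤ, (x ^ k)⁻¹ * y ∈ H i

namespace SkewBrace

variable {B : Type*} [SkewBrace B]

/-- `lam a b = -a + a * b`, i.e. `λ_a(b)`. -/
def lam (a b : B) : B := -a + a * b

/-- the star operation `a ∗ b = λ_a(b) - b`. -/
def starOp (a b : B) : B := lam a b + -b

/-- the additive commutator `[a,b]_+`. -/
def addCommutator (a b : B) : B := -a + -b + a + b

/-- A subbrace of `B`: a subset that is a subgroup of both `(B,+)` and `(B,·)`. -/
structure Subbrace (B : Type*) [SkewBrace B] where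
  carrier : Set B
  zero_mem : (0 : B) ∈ carrier
  add_mem : ∀ {a b : B}, a ∈ carrier → b ∈ carrier → a + b ∈ carrier
  neg_mem : ∀ {a : B}, a ∈ carrier → -a ∈ carrier
  mul_mem : ∀ {a b : B}, a ∈ carrier → b ∈ carrier → a * b ∈ carrier
  inv_mem : ∀ {a : B}, a ∈ carrier → a⁻¹ ∈ carrier

/-- An ideal of `B`: a subbrace that is normal in `(B,+)` and in `(B,·)` and is
invariant under all the maps `λ_b`. -/
structure BraceIdeal (B : Type*) [SkewBrace B] extends Subbrace B where
  addConj_mem : ∀ (b : B) {a : B}, a ∈ carrier → b + a + -b ∈ carrier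
  mulConj_mem : ∀ (b : B) {a : B}, a ∈ carrier → b * a * b⁻¹ ∈ carrier
  lam_mem : ∀ (b : B) {a : B}, a ∈ carrier → lam b a ∈ carrier

/-- The additive subgroup underlying a subbrace. -/
def Subbrace.addSubgroup (S : Subbrace B) : AddSubgroup B where
  carrier := S.carrier
  zero_mem' := S.zero_mem
  add_mem' := S.add_mem
  neg_mem' := S.neg_mem

/-- The multiplicative subgroup underlying a subbrace. -/
def Subbrace.subgroup (S : Subbrace B) : Subgroup B where
  carrier := S.carrier
  one_mem' := by rw [one_eq_zero]; exact S.zero_mem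
  mul_mem' := S.mul_mem
  inv_mem' := S.inv_mem

/-- Given ideals `J ≤ I` of `B`, `MemSocQuotRel I J x` says that the coset of `x`
lies in `Soc(I/J) = Ker(λ) ∩ Z(I/J, +)` (for `I = B` take `I = Set.univ`). -/
def MemSocQuotRel (I J : Set B) (x : B) : Prop :=
  x ∈ I ∧ (∀ y ∈ I, -y + lam x y ∈ J) ∧ ∀ y ∈ I, -(y + x) + (x + y) ∈ J

/-- Given ideals `J ≤ I` of `B`, `MemZetaQuotRel I J x` says that the coset of `x`
lies in `ζ(I/J) = Soc(I/J) ∩ Z(I/J, ·)`. -/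
def MemZetaQuotRel (I J : Set B) (x : B) : Prop :=
  MemSocQuotRel I J x ∧ ∀ y ∈ I, (y * x)⁻¹ * (x * y) ∈ J

/-- The coset of `x` lies in `Soc(B/J)`. -/
def MemSocQuot (J : Set B) (x : B) : Prop := MemSocQuotRel Set.univ J x

/-- The coset of `x` lies in `ζ(B/J)`. -/
def MemZetaQuot (J : Set B) (x : B) : Prop := MemZetaQuotRel Set.univ J x

/-- For ideals `I ≤ J`, the additive group of the quotient `J/I` is infinite cyclic. -/
def QuotAddInfCyclic (I J : Set B) : Prop :=
  ∃ x ∈ J, (∀ y ∈ J, ∃ n : ℤ, -(n • x) + y ∈ I) ∧ ∀ n : ℤ, n • x ∈ I → n = 0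

/-- For ideals `I ≤ J`, the quotient `J/I` has prime order `p`. -/
def QuotPrimeOrder (I J : Set B) (p : ℕ) : Prop :=
  p.Prime ∧ ∃ x ∈ J, x ∉ I ∧ p • x ∈ I ∧ ∀ y ∈ J, ∃ n : ℤ, -(n • x) + y ∈ I

/-- A brace is supersoluble if it has a finite chain of ideals each factor of which
either is additively infinite cyclic and contained in the socle of the corresponding
quotient, or has prime order. -/
def IsSupersoluble (B : Type*) [SkewBrace B] : Prop :=
  ∃ (n : ℕ) (I : ℕ → BraceIdeal B),
    (I 0).carrier = {0} ∧ (I n).carrier = Set.univ ∧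
    (∀ i, i < n → (I i).carrier ⊆ (I (i + 1)).carrier) ∧
    ∀ i, i < n →
      (QuotAddInfCyclic (I i).carrier (I (i + 1)).carrier ∧
        ∀ x ∈ (I (i + 1)).carrier, MemSocQuot (I i).carrier x) ∨
      ∃ p : ℕ, QuotPrimeOrder (I i).carrier (I (i + 1)).carrier p

/-- The upper socle series of the brace (carrier of the ideal) `I`. -/
def socChainRel (I : Set B) : ℕ → Set B
  | 0 => {0}
  | n + 1 => {x | MemSocQuotRel I (socChainRel I n) x}

/-- The upper central series of the brace (carrier of the ideal) `I`. -/
def zetaChainRel (I : Set B) : ℕ → Set B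
  | 0 => {0}
  | n + 1 => {x | MemZetaQuotRel I (zetaChainRel I n) x}

/-- The upper socle series `Soc_n(B)` of `B`. -/
def socChain (B : Type*) [SkewBrace B] : ℕ → Set B := socChainRel Set.univ

/-- The upper central series `ζ_n(B)` of `B`. -/
def zetaChain (B : Type*) [SkewBrace B] : ℕ → Set B := zetaChainRel Set.univ

/-- A brace is centrally nilpotent if its upper central series reaches `B`. -/
def IsCentrallyNilpotent (B : Type*) [SkewBrace B] : Prop :=
  ∃ m : ℕ, zetaChain B m = Set.univ

end SkewBrace

namespace SkewBrace

section Basic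

variable {B : Type*} [SkewBrace B]

theorem mul_eq_add_lam (a b : B) : a * b = a + lam a b := by simp [lam]

theorem lam_add (a b c : B) : lam a (b + c) = lam a b + lam a c := by
  simp only [lam, skew_distrib, add_assoc]

theorem lam_mul (a b c : B) : lam (a * b) c = lam a (lam b c) := by
  have h1 : a * (b * c) = a * b + lam a (lam b c) := by
    rw [mul_eq_add_lam b c, skew_distrib, add_assoc]; rfl
  rw [← mul_assoc] at h1
  rw [lam, h1]; simp

theorem lam_zero (a : B) : lam a 0 = 0 := by
  have := lam_add a 0 0
  simpa using this

theorem lam_neg (a b : B) : lam a (-b) = -lam a b := by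
  apply eq_neg_of_add_eq_zero_left
  rw [← lam_add]; simp [lam_zero]

theorem lam_one (b : B) : lam 1 b = b := by
  simp [lam, one_eq_zero]

theorem lam_zero_left (b : B) : lam 0 b = b := by rw [← one_eq_zero, lam_one]

theorem lam_inv_lam (a b : B) : lam a⁻¹ (lam a b) = b := by
  rw [← lam_mul]; simp [lam_one]

theorem lam_lam_inv (a b : B) : lam a (lam a⁻¹ b) = b := by
  rw [← lam_mul]; simp [lam_one]

/-- `lam a` as an additive homomorphism. -/
def lamHom (a : B) : B →+ B where
  toFun := lam a
  map_zero' := lam_zero a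
  map_add' := lam_add a

theorem lam_zsmul (a : B) (n : ℤ) (b : B) : lam a (n • b) = n • lam a b :=
  map_zsmul (lamHom a) n b

theorem lam_nsmul (a : B) (n : ℕ) (b : B) : lam a (n • b) = n • lam a b :=
  map_nsmul (lamHom a) n b

theorem inv_eq_neg_lam (a : B) : a⁻¹ = -lam a⁻¹ a := by
  apply eq_neg_of_add_eq_zero_left
  rw [← mul_eq_add_lam]; simp [one_eq_zero]

theorem add_eq_mul_lam (a b : B) : a + b = a * lam a⁻¹ b := by
  rw [mul_eq_add_lam, lam_lam_inv]

/-- Build an ideal from an additive normal `λ`-invariant subgroup. -/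
def mkIdeal (S : Set B) (h0 : (0 : B) ∈ S) (ha : ∀ {a b : B}, a ∈ S → b ∈ S → a + b ∈ S)
    (hn : ∀ {a : B}, a ∈ S → -a ∈ S) (hl : ∀ (b : B) {a : B}, a ∈ S → lam b a ∈ S)
    (hc : ∀ (b : B) {a : B}, a ∈ S → b + a + -b ∈ S)
    (hm : ∀ (b : B) {a : B}, a ∈ S → b * a * b⁻¹ ∈ S) : BraceIdeal B where
  carrier := S
  zero_mem := h0
  add_mem := ha
  neg_mem := hn
  mul_mem := fun {a b} h1 h2 => by rw [mul_eq_add_lam]; exact ha h1 (hl _ h2)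
  inv_mem := fun {a} h => by rw [inv_eq_neg_lam]; exact hn (hl _ h)
  addConj_mem := hc
  mulConj_mem := hm
  lam_mem := hl

theorem ideal_ext {I J : BraceIdeal B} (h : I.carrier = J.carrier) : I = J := by
  obtain ⟨⟨c, _, _, _, _, _⟩, _, _, _⟩ := I
  obtain ⟨⟨d, _, _, _, _, _⟩, _, _, _⟩ := J
  simp only at h
  subst h
  rfl

theorem BraceIdeal.zsmul_mem (I : BraceIdeal B) (n : ℤ) {x : B} (h : x ∈ I.carrier) :
    n • x ∈ I.carrier := I.addSubgroup.zsmul_mem h n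

theorem BraceIdeal.addConj_mem_iff (I : BraceIdeal B) (a b : B) :
    a + b ∈ I.carrier ↔ b + a ∈ I.carrier := by
  constructor
  · intro h; simpa using I.addConj_mem (-a) h
  · intro h; simpa using I.addConj_mem (-b) h

theorem BraceIdeal.rel_iff (I : BraceIdeal B) (a b : B) :
    -a + b ∈ I.carrier ↔ a⁻¹ * b ∈ I.carrier := by
  have h : lam a⁻¹ (-a + b) = a⁻¹ * b := by
    rw [lam_add, lam_neg, ← inv_eq_neg_lam, ← mul_eq_add_lam]
  constructor
  · intro h1; rw [← h]; exact I.lam_mem _ h1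
  · intro h1; rw [← h] at h1
    have := I.lam_mem a h1
    rwa [lam_lam_inv] at this

end Basic

section Quot

/-- A surjective brace homomorphism. -/
structure IsSurj {B C : Type*} [SkewBrace B] [SkewBrace C] (f : B → C) : Prop where
  add : ∀ a b, f (a + b) = f a + f b
  mul : ∀ a b, f (a * b) = f a * f b
  surj : Function.Surjective f

variable {B C : Type*} [SkewBrace B] [SkewBrace C] {f : B → C}

theorem IsSurj.zero (h : IsSurj f) : f 0 = 0 := by simpa using h.add 0 0
theorem IsSurj.neg (h : IsSurj f) (a : B) : f (-a) = - f a := by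
  apply eq_neg_of_add_eq_zero_left; rw [← h.add]; simp [h.zero]
theorem IsSurj.inv (h : IsSurj f) (a : B) : f (a⁻¹) = (f a)⁻¹ := by
  apply eq_inv_of_mul_eq_one_left; rw [← h.mul]; simp [one_eq_zero, h.zero]
theorem IsSurj.zsmul (h : IsSurj f) (n : ℤ) (a : B) : f (n • a) = n • f a :=
  map_zsmul (AddMonoidHom.mk' f h.add) n a
theorem IsSurj.nsmul (h : IsSurj f) (n : ℕ) (a : B) : f (n • a) = n • f a :=
  map_nsmul (AddMonoidHom.mk' f h.add) n a
theorem IsSurj.pow (h : IsSurj f) (n : ℕ) (a : B) : f (a ^ n) = f a ^ n :=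
  map_pow (MonoidHom.mk' f h.mul) a n
theorem IsSurj.lam (h : IsSurj f) (a b : B) : f (lam a b) = lam (f a) (f b) := by
  simp only [SkewBrace.lam, h.add, h.mul, h.neg]

/-- preimage ideal -/
def comap (h : IsSurj f) (I : BraceIdeal C) : BraceIdeal B :=
  mkIdeal (f ⁻¹' I.carrier)
    (by simp only [Set.mem_preimage, h.zero]; exact I.zero_mem)
    (fun h1 h2 => by
      simp only [Set.mem_preimage, h.add] at *; exact I.add_mem h1 h2)
    (fun h1 => by simp only [Set.mem_preimage, h.neg] at *; exact I.neg_mem h1)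
    (fun b _ h1 => by simp only [Set.mem_preimage, h.lam] at *; exact I.lam_mem _ h1)
    (fun b _ h1 => by
      simp only [Set.mem_preimage, h.add, h.neg] at *; exact I.addConj_mem _ h1)
    (fun b _ h1 => by
      simp only [Set.mem_preimage, h.mul, h.inv] at *; exact I.mulConj_mem _ h1)

/-- image ideal -/
def mapIdeal (h : IsSurj f) (I : BraceIdeal B) : BraceIdeal C :=
  mkIdeal (f '' I.carrier)
    ⟨0, I.zero_mem, h.zero⟩
    (by rintro _ _ ⟨a, ha, rfl⟩ ⟨b, hb, rfl⟩; exact ⟨a + b, I.add_mem ha hb, h.add _ _⟩)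
    (by rintro _ ⟨a, ha, rfl⟩; exact ⟨-a, I.neg_mem ha, h.neg _⟩)
    (by
      rintro c _ ⟨a, ha, rfl⟩
      obtain ⟨b, rfl⟩ := h.surj c
      exact ⟨_, I.lam_mem b ha, h.lam _ _⟩)
    (by
      rintro c _ ⟨a, ha, rfl⟩
      obtain ⟨b, rfl⟩ := h.surj c
      exact ⟨_, I.addConj_mem b ha, by simp only [h.add, h.neg]⟩)
    (by
      rintro c _ ⟨a, ha, rfl⟩
      obtain ⟨b, rfl⟩ := h.surj c
      exact ⟨_, I.mulConj_mem b ha, by simp only [h.mul, h.inv]⟩)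

theorem eq_comap (h : IsSurj f) (I J : BraceIdeal B) (hk : ∀ a, f a = 0 ↔ a ∈ I.carrier)
    (hIJ : I.carrier ⊆ J.carrier) : J = comap h (mapIdeal h J) := by
  apply ideal_ext
  ext a
  constructor
  · intro ha; exact ⟨a, ha, rfl⟩
  · rintro ⟨b, hb, hab⟩
    have : -b + a ∈ I.carrier := by rw [← hk, h.add, h.neg, hab]; simp
    have := J.add_mem hb (hIJ this)
    simpa using this

/-- The zero ideal. -/
def botIdeal (B : Type*) [SkewBrace B] : BraceIdeal B :=
  mkIdeal {0} (by simp) (by simp) (by simp) (by simp [lam_zero]) (by simp)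
    (by simp only [Set.mem_singleton_iff]; rintro b a rfl; rw [← one_eq_zero]; simp)

theorem eq_comap_bot (h : IsSurj f) (I : BraceIdeal B) (hk : ∀ a, f a = 0 ↔ a ∈ I.carrier) :
    I = comap h (botIdeal C) := by
  apply ideal_ext
  ext a
  exact (hk a).symm

theorem qpo_preimage (h : IsSurj f) (X Y : Set C) (p : ℕ) :
    QuotPrimeOrder (f ⁻¹' X) (f ⁻¹' Y) p ↔ QuotPrimeOrder X Y p := by
  simp only [QuotPrimeOrder, h.surj.exists, h.surj.forall, Set.mem_preimage, h.add, h.neg,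
    h.zsmul, h.nsmul]

/-- `x` generates the infinite cyclic quotient `J/I`. -/
def GenZ (I J : Set B) (x : B) : Prop :=
  x ∈ J ∧ (∀ y ∈ J, ∃ n : ℤ, -(n • x) + y ∈ I) ∧ ∀ n : ℤ, n • x ∈ I → n = 0

theorem genZ_preimage (h : IsSurj f) (X Y : Set C) (x : B) :
    GenZ (f ⁻¹' X) (f ⁻¹' Y) x ↔ GenZ X Y (f x) := by
  simp only [GenZ, h.surj.forall, Set.mem_preimage, h.add, h.neg,
    h.zsmul]

theorem soc_preimage (h : IsSurj f) (X : Set C) (x : B) :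
    MemSocQuot (f ⁻¹' X) x ↔ MemSocQuot X (f x) := by
  simp only [MemSocQuot, MemSocQuotRel, h.surj.forall, Set.mem_preimage, h.add, h.neg,
    h.lam, Set.mem_univ, true_imp_iff]

/-- factor of prime order -/
def StepP (p : ℕ) (I J : BraceIdeal B) : Prop :=
  I.carrier ⊆ J.carrier ∧ QuotPrimeOrder I.carrier J.carrier p

/-- infinite cyclic factor in the socle with given generator -/
def StepG (x : B) (I J : BraceIdeal B) : Prop :=
  I.carrier ⊆ J.carrier ∧ GenZ I.carrier J.carrier x ∧
    ∀ x ∈ J.carrier, MemSocQuot I.carrier x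

/-- infinite cyclic factor in the socle -/
def StepZ (I J : BraceIdeal B) : Prop := ∃ x, StepG x I J

theorem comap_subset (h : IsSurj f) (I J : BraceIdeal C) :
    (comap h I).carrier ⊆ (comap h J).carrier ↔ I.carrier ⊆ J.carrier :=
  h.surj.preimage_subset_preimage_iff

theorem stepP_comap (h : IsSurj f) (p : ℕ) (I J : BraceIdeal C) :
    StepP p (comap h I) (comap h J) ↔ StepP p I J :=
  and_congr (comap_subset h I J) (qpo_preimage h _ _ _)

theorem stepG_comap (h : IsSurj f) (x : B) (I J : BraceIdeal C) :
    StepG x (comap h I) (comap h J) ↔ StepG (f x) I J := by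
  refine and_congr (comap_subset h I J) (and_congr (genZ_preimage h _ _ _) ?_)
  simp only [h.surj.forall]
  exact forall_congr' fun a => imp_congr Iff.rfl (soc_preimage h _ _)

theorem stepZ_comap (h : IsSurj f) (I J : BraceIdeal C) :
    StepZ (comap h I) (comap h J) ↔ StepZ I J := by
  simp only [StepZ, stepG_comap, h.surj.exists]

end Quot

section QuotConstr

universe u
variable {B : Type u} [SkewBrace B] (I : BraceIdeal B)

/-- coset setoid -/
def qsetoid : Setoid B where
  r a b := -a + b ∈ I.carrier
  iseqv := by
    refine ⟨fun a => by simpa using I.zero_mem, fun {a b} h => ?_, fun {a b c} h1 h2 => ?_⟩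
    · simpa using I.neg_mem h
    · simpa [add_assoc] using I.add_mem h1 h2

/-- The quotient brace. -/
def QB : Type u := Quotient (qsetoid I)

/-- projection -/
def qmk (a : B) : QB I := Quotient.mk (qsetoid I) a

theorem qmk_surj : Function.Surjective (qmk I) := Quotient.mk_surjective

theorem qmk_eq (a b : B) : qmk I a = qmk I b ↔ -a + b ∈ I.carrier := Quotient.eq (r := qsetoid I)

instance : Add (QB I) := ⟨Quotient.map₂ (· + ·) (by
  intro a a' (h : -a + a' ∈ I.carrier) b b' (h' : -b + b' ∈ I.carrier)
  show -(a + b) + (a' + b') ∈ I.carrier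
  have h1 := I.add_mem (I.addConj_mem (-b) h) h'
  simpa [add_assoc] using h1)⟩
instance : Neg (QB I) := ⟨Quotient.map (- ·) (by
  intro a a' (h : -a + a' ∈ I.carrier)
  show -(-a) + (-a') ∈ I.carrier
  have h1 := I.addConj_mem a (I.neg_mem h)
  simpa [add_assoc] using h1)⟩
instance : Zero (QB I) := ⟨qmk I 0⟩
instance : Mul (QB I) := ⟨Quotient.map₂ (· * ·) (by
  intro a a' (h : -a + a' ∈ I.carrier) b b' (h' : -b + b' ∈ I.carrier)
  show -(a * b) + (a' * b') ∈ I.carrier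
  rw [I.rel_iff] at *
  have h1 := I.mul_mem (I.mulConj_mem (b⁻¹) h) h'
  simpa [mul_assoc] using h1)⟩
instance : Inv (QB I) := ⟨Quotient.map (·⁻¹) (by
  intro a a' (h : -a + a' ∈ I.carrier)
  show -(a⁻¹) + (a'⁻¹) ∈ I.carrier
  rw [I.rel_iff] at *
  have h1 := I.mulConj_mem a (I.inv_mem h)
  simpa [mul_assoc] using h1)⟩
instance : One (QB I) := ⟨qmk I 1⟩

theorem qmk_add (a b : B) : qmk I (a + b) = qmk I a + qmk I b := rfl
theorem qmk_mul (a b : B) : qmk I (a * b) = qmk I a * qmk I b := rfl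
theorem qmk_neg (a : B) : qmk I (-a) = - qmk I a := rfl
theorem qmk_inv (a : B) : qmk I (a⁻¹) = (qmk I a)⁻¹ := rfl
theorem qmk_zero : qmk I 0 = 0 := rfl
theorem qmk_one : qmk I 1 = 1 := rfl

instance : AddGroup (QB I) := AddGroup.ofLeftAxioms
  (by simp only [(qmk_surj I).forall, ← qmk_add, add_assoc, implies_true])
  (by simp only [(qmk_surj I).forall, ← qmk_add, ← qmk_zero, zero_add, implies_true])
  (by simp only [(qmk_surj I).forall, ← qmk_add, ← qmk_zero, ← qmk_neg, neg_add_cancel,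
      implies_true])

instance : Group (QB I) := Group.ofLeftAxioms
  (by simp only [(qmk_surj I).forall, ← qmk_mul, mul_assoc, implies_true])
  (by simp only [(qmk_surj I).forall, ← qmk_mul, ← qmk_one, one_mul, implies_true])
  (by simp only [(qmk_surj I).forall, ← qmk_mul, ← qmk_one, ← qmk_inv, inv_mul_cancel,
      implies_true])

instance : SkewBrace (QB I) where
  one_eq_zero := by rw [← qmk_one, one_eq_zero]; rfl
  skew_distrib := by
    simp only [(qmk_surj I).forall]
    intro a b c
    have := congrArg (qmk I) (skew_distrib a b c)
    exact this

theorem qmk_isSurj : IsSurj (qmk I) := ⟨fun _ _ => rfl, fun _ _ => rfl, qmk_surj I⟩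

theorem qmk_ker (a : B) : qmk I a = 0 ↔ a ∈ I.carrier := by
  rw [← qmk_zero, eq_comm, qmk_eq]; simp

theorem exists_quot : ∃ (C : Type u) (_ : SkewBrace C) (f : B → C), IsSurj f ∧
    ∀ a, f a = 0 ↔ a ∈ I.carrier :=
  ⟨QB I, inferInstance, qmk I, qmk_isSurj I, qmk_ker I⟩

end QuotConstr
end SkewBrace

namespace SkewBrace

section Groups

theorem pq_aux {G : Type*} [Group G] {p q : ℕ} (hp : p.Prime) (hq : q.Prime) (hlt : p < q)
    (hc : Nat.card G = p * q) :
    ∃ S : Subgroup G, Nat.card S = q ∧ ∀ g, g ∈ S ↔ g ^ q = 1 := by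
  have hfin : Finite G := Nat.finite_of_card_ne_zero (by
    rw [hc]; exact Nat.mul_ne_zero hp.ne_zero hq.ne_zero)
  have : Fact q.Prime := ⟨hq⟩
  obtain ⟨S, hS⟩ := Sylow.exists_subgroup_card_pow_prime (G := G) q (n := 1)
    (by rw [hc, pow_one]; exact Dvd.intro_left p rfl)
  rw [pow_one] at hS
  have hidx : S.index = p := by
    have := S.card_mul_index
    rw [hS, hc, mul_comm p q] at this
    exact Nat.eq_of_mul_eq_mul_left hq.pos this
  have hmin : (Nat.card G).minFac = p := by
    rw [hc]
    apply le_antisymm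
    · exact Nat.minFac_le_of_dvd hp.two_le (Dvd.intro _ rfl)
    · have h1 : (p * q).minFac.Prime := Nat.minFac_prime (by
        intro h; exact hp.one_lt.ne' (Nat.eq_one_of_mul_eq_one_right h))
      rcases (Nat.Prime.dvd_mul h1).1 (Nat.minFac_dvd _) with h | h
      · exact ((Nat.prime_dvd_prime_iff_eq h1 hp).1 h).ge
      · rw [(Nat.prime_dvd_prime_iff_eq h1 hq).1 h]; exact hlt.le
  have : S.Normal := Subgroup.normal_of_index_eq_minFac_card (by rw [hidx, hmin])
  refine ⟨S, hS, fun g => ⟨fun hg => ?_, fun hg => ?_⟩⟩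
  · have := pow_card_eq_one' (x := (⟨g, hg⟩ : S))
    rw [hS] at this
    simpa using congrArg Subtype.val this
  · rw [← QuotientGroup.eq_one_iff]
    have h1 : ((g : G ⧸ S)) ^ q = 1 := by rw [← QuotientGroup.mk_pow, hg]; rfl
    have h2 : ((g : G ⧸ S)) ^ p = 1 := by
      have := pow_card_eq_one' (x := (g : G ⧸ S))
      rwa [← Subgroup.index_eq_card, hidx] at this
    have h3 := Nat.dvd_gcd (orderOf_dvd_of_pow_eq_one h1) (orderOf_dvd_of_pow_eq_one h2)
    rw [(Nat.coprime_primes hq hp).2 hlt.ne'] at h3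
    exact orderOf_eq_one_iff.1 (Nat.dvd_one.1 h3)

theorem pq_sub {G : Type*} [Group G] {p q : ℕ} (hp : p.Prime) (hq : q.Prime) (hlt : p < q)
    (K : Subgroup G) (hc : Nat.card K = p * q) :
    ∃ S : Subgroup G, S ≤ K ∧ Nat.card S = q ∧ (∀ g ∈ K, g ∈ S ↔ g ^ q = 1) ∧
      ∀ J : Subgroup G, J ≤ K → Nat.card J = p → ∀ g ∈ K, ∃ j ∈ J, ∃ s ∈ S, j * s = g := by
  obtain ⟨S, hS, h⟩ := pq_aux hp hq hlt hc
  refine ⟨S.map K.subtype, Subgroup.map_subtype_le S, ?_, ?_, ?_⟩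
  · rw [← hS]
    exact (Nat.card_congr (S.equivMapOfInjective _ K.subtype_injective).toEquiv).symm
  · intro g hg
    have := h ⟨g, hg⟩
    simp only [Subgroup.mem_map, Subgroup.subtype_apply]
    rw [show g ^ q = 1 ↔ (⟨g, hg⟩ : K) ^ q = 1 by simp [Subtype.ext_iff], ← this]
    constructor
    · rintro ⟨x, hx, rfl⟩; exact hx
    · intro hx; exact ⟨_, hx, rfl⟩
  · intro J hJ hJc g hg
    have hfin : Finite K := Nat.finite_of_card_ne_zero (by
      rw [hc]; exact Nat.mul_ne_zero hp.ne_zero hq.ne_zero)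
    have hJc' : Nat.card (J.subgroupOf K) = p := by
      rw [← hJc]; exact Nat.card_congr (Subgroup.subgroupOfEquivOfLe hJ).toEquiv
    have hcompl : Subgroup.IsComplement' (J.subgroupOf K) S :=
      Subgroup.isComplement'_of_coprime (by rw [hJc', hS, hc])
        (by rw [hJc', hS]; exact (Nat.coprime_primes hp hq).2 hlt.ne)
    obtain ⟨⟨j, s⟩, hjs⟩ := hcompl.2 ⟨g, hg⟩
    refine ⟨j.1.1, j.2, s.1.1, ⟨s.1, s.2, rfl⟩, ?_⟩
    exact congrArg Subtype.val hjs

theorem pq_sub_add {G : Type*} [AddGroup G] {p q : ℕ} (hp : p.Prime) (hq : q.Prime) (hlt : p < q)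
    (K : AddSubgroup G) (hc : Nat.card K = p * q) :
    ∃ S : AddSubgroup G, S ≤ K ∧ Nat.card S = q ∧ (∀ g ∈ K, g ∈ S ↔ q • g = 0) ∧
      ∀ J : AddSubgroup G, J ≤ K → Nat.card J = p → ∀ g ∈ K, ∃ j ∈ J, ∃ s ∈ S, j + s = g := by
  obtain ⟨S, h1, h2, h3, h4⟩ := pq_sub hp hq hlt (AddSubgroup.toSubgroup K) hc
  refine ⟨Subgroup.toAddSubgroup' S, h1, h2, h3, fun J hJ hJc => h4 (AddSubgroup.toSubgroup J) hJ hJc⟩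

theorem index_eq_prime {G : Type*} [AddGroup G] (N : AddSubgroup G) [N.Normal] {p : ℕ}
    (hp : p.Prime) (x : G) (hx : x ∉ N) (hpx : p • x ∈ N)
    (h : ∀ y, ∃ n : ℤ, -(n • x) + y ∈ N) : N.index = p := by
  have : Fact p.Prime := ⟨hp⟩
  have ho : addOrderOf (x : G ⧸ N) = p := by
    apply addOrderOf_eq_prime
    · rw [← QuotientAddGroup.mk_nsmul]; exact (QuotientAddGroup.eq_zero_iff _).2 hpx
    · rwa [Ne, QuotientAddGroup.eq_zero_iff]
  rw [AddSubgroup.index_eq_card, ← ho, ← Nat.card_zmultiples]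
  have : AddSubgroup.zmultiples (x : G ⧸ N) = ⊤ := by
    rw [eq_top_iff]
    intro y _
    obtain ⟨y, rfl⟩ := QuotientAddGroup.mk_surjective y
    obtain ⟨n, hn⟩ := h y
    refine ⟨n, ?_⟩
    show n • (x : G ⧸ N) = y
    rw [← QuotientAddGroup.mk_zsmul]
    exact QuotientAddGroup.eq.2 hn
  rw [this]
  exact Nat.card_congr AddSubgroup.topEquiv.toEquiv.symm

end Groups

section Cards

universe u
variable {B : Type u} [SkewBrace B]

theorem card_bot : Nat.card (botIdeal B).carrier = 1 := by
  show Nat.card ({0} : Set B) = 1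
  simp

theorem card_stepP {I J : BraceIdeal B} {p : ℕ} (h : StepP p I J) :
    Nat.card J.carrier = Nat.card I.carrier * p := by
  obtain ⟨hle, hp, x, hx, hxI, hpx, hgen⟩ := h
  have hle' : I.addSubgroup ≤ J.addSubgroup := hle
  have : (I.addSubgroup.addSubgroupOf J.addSubgroup).Normal :=
    ⟨fun n hn g => by
      rw [AddSubgroup.mem_addSubgroupOf] at *
      exact I.addConj_mem g.1 hn⟩
  have hi := index_eq_prime (I.addSubgroup.addSubgroupOf J.addSubgroup) hp ⟨x, hx⟩
    (by rw [AddSubgroup.mem_addSubgroupOf]; exact hxI)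
    (by rw [AddSubgroup.mem_addSubgroupOf]; exact hpx)
    (by
      rintro ⟨y, hy⟩
      obtain ⟨n, hn⟩ := hgen y hy
      exact ⟨n, by rw [AddSubgroup.mem_addSubgroupOf]; exact hn⟩)
  have h2 := (I.addSubgroup.addSubgroupOf J.addSubgroup).card_mul_index
  rw [hi, Nat.card_congr (AddSubgroup.addSubgroupOfEquivOfLe hle').toEquiv] at h2
  exact h2.symm

theorem stepP_pow_mem {I J : BraceIdeal B} {p : ℕ} (h : StepP p I J) {k : B}
    (hk : k ∈ J.carrier) : k ^ p ∈ I.carrier := by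
  obtain ⟨C, _, f, hs, hker⟩ := exists_quot I
  rw [← hker, hs.pow]
  rw [eq_comap hs I J hker h.1, eq_comap_bot hs I hker, stepP_comap] at h
  have hc := card_stepP h
  rw [card_bot, one_mul] at hc
  have hk' : f k ∈ (mapIdeal hs J).subgroup := ⟨k, hk, rfl⟩
  have := pow_card_eq_one' (x := (⟨_, hk'⟩ : (mapIdeal hs J).subgroup))
  rw [show Nat.card (mapIdeal hs J).subgroup = p from hc] at this
  have := congrArg Subtype.val this
  rw [← one_eq_zero]
  simpa using this

theorem mem_of_card_prime {S : AddSubgroup B} {q : ℕ} (hq : q.Prime) (hS : Nat.card S = q) :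
    ∃ x ∈ S, x ≠ 0 ∧ q • x = 0 ∧ ∀ y ∈ S, ∃ n : ℤ, n • x = y := by
  have : Fact q.Prime := ⟨hq⟩
  have : Finite S := Nat.finite_of_card_ne_zero (by rw [hS]; exact hq.ne_zero)
  have : Nontrivial S := Finite.one_lt_card_iff_nontrivial.1 (by rw [hS]; exact hq.one_lt)
  obtain ⟨x, hx⟩ := exists_ne (0 : S)
  refine ⟨x, x.2, by simpa using hx, ?_, fun y hy => ?_⟩
  · have := card_nsmul_eq_zero' (x := x)
    rw [hS] at this
    simpa using congrArg Subtype.val this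
  · obtain ⟨n, hn⟩ := mem_zmultiples_of_prime_card (p := q) hS hx (g' := ⟨y, hy⟩)
    exact ⟨n, congrArg Subtype.val hn⟩

theorem swapA_bot {J K : BraceIdeal B} {p q : ℕ} (hlt : p < q)
    (h1 : StepP p (botIdeal B) J) (h2 : StepP q J K) :
    ∃ Q, StepP q (botIdeal B) Q ∧ StepP p Q K := by
  have hp := h1.2.1
  have hq := h2.2.1
  have hcJ := card_stepP h1
  have hcK := card_stepP h2
  rw [card_bot, one_mul] at hcJ
  rw [hcJ] at hcK
  obtain ⟨S, hSK, hSc, hS, hSJ⟩ := pq_sub_add hp hq hlt K.addSubgroup hcK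
  obtain ⟨T, hTK, hTc, hT, -⟩ := pq_sub hp hq hlt K.subgroup hcK
  have hSKc : ∀ {a}, a ∈ S → a ∈ K.carrier := fun h => hSK h
  have hlam : ∀ (b : B) {a : B}, a ∈ S → lam b a ∈ S := by
    intro b a ha
    refine (hS _ (K.lam_mem b (hSK ha))).2 ?_
    rw [← lam_nsmul, (hS _ (hSK ha)).1 ha, lam_zero]
  let S' : Subgroup B :=
    { carrier := S
      one_mem' := by rw [one_eq_zero]; exact S.zero_mem
      mul_mem' := fun {a b} h1 h2 => by rw [mul_eq_add_lam]; exact S.add_mem h1 (hlam _ h2)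
      inv_mem' := fun {a} h => by rw [inv_eq_neg_lam]; exact S.neg_mem (hlam _ h) }
  have hS'c : Nat.card S' = q := hSc
  have hST : S' ≤ T := by
    intro a ha
    refine (hT a (hSK ha)).2 ?_
    have := pow_card_eq_one' (x := (⟨a, ha⟩ : S'))
    rw [hS'c] at this
    simpa using congrArg Subtype.val this
  have : Finite T := Nat.finite_of_card_ne_zero (by rw [hTc]; exact hq.ne_zero)
  have hSTe : S' = T := Subgroup.eq_of_le_of_card_ge hST (by rw [hTc, hS'c])
  have hmemT : ∀ {a}, a ∈ S ↔ a ∈ T := fun {a} => by rw [← hSTe]; rfl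
  let Q : BraceIdeal B := mkIdeal (S : Set B) S.zero_mem S.add_mem S.neg_mem hlam
    (fun b a ha => by
      refine (hS _ (K.addConj_mem b (hSK ha))).2 ?_
      have := (hS _ (hSK ha)).1 ha
      have h3 := map_nsmul (AddAut.addConj b) q a
      simp only [AddAut.addConj_apply, this] at h3
      rw [← h3]; simp)
    (fun b a ha => by
      refine hmemT.2 ((hT _ (K.mulConj_mem b (hSK ha))).2 ?_)
      rw [conj_pow, (hT _ (hSK ha)).1 (hmemT.1 ha)]; simp)
  refine ⟨Q, ⟨?_, hq, ?_⟩, ⟨fun a ha => hSK ha, hp, ?_⟩⟩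
  · rintro a (rfl : a = 0); exact S.zero_mem
  · obtain ⟨x, hx, hx0, hqx, hg⟩ := mem_of_card_prime hq hSc
    refine ⟨x, hx, hx0, hqx, fun y hy => ?_⟩
    obtain ⟨n, hn⟩ := hg y hy
    exact ⟨n, by rw [hn, neg_add_cancel]; rfl⟩
  · obtain ⟨x, hx, hx0, hpx, hg⟩ := h1.2.2
    refine ⟨x, h2.1 hx, fun hxS => hx0 ?_, ?_, fun y hy => ?_⟩
    · have h3 := (hS x (h2.1 hx)).1 hxS
      have h4 : p • x = 0 := hpx
      have h5 := Nat.dvd_gcd (addOrderOf_dvd_of_nsmul_eq_zero h3)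
        (addOrderOf_dvd_of_nsmul_eq_zero h4)
      rw [(Nat.coprime_primes hq hp).2 hlt.ne'] at h5
      exact AddMonoid.addOrderOf_eq_one_iff.1 (Nat.dvd_one.1 h5)
    · have h4 : p • x = 0 := hpx
      rw [h4]; exact S.zero_mem
    · obtain ⟨j, hj, s, hs, rfl⟩ := hSJ J.addSubgroup h2.1 hcJ y hy
      obtain ⟨n, hn⟩ := hg j hj
      refine ⟨n, ?_⟩
      rw [← add_assoc, show -(n • x) + j = 0 from hn, zero_add]
      exact hs

theorem swapA {I J K : BraceIdeal B} {p q : ℕ} (hlt : p < q)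
    (h1 : StepP p I J) (h2 : StepP q J K) :
    ∃ Q, StepP q I Q ∧ StepP p Q K := by
  obtain ⟨C, _, f, hs, hker⟩ := exists_quot I
  have eI := eq_comap_bot hs I hker
  have eJ := eq_comap hs I J hker h1.1
  have eK := eq_comap hs I K hker (h1.1.trans h2.1)
  rw [eJ, eK, stepP_comap] at h2
  rw [eI, eJ, stepP_comap] at h1
  obtain ⟨Q, hQ1, hQ2⟩ := swapA_bot hlt h1 h2
  refine ⟨comap hs Q, ?_, ?_⟩
  · rw [← stepP_comap hs, ← eI] at hQ1; exact hQ1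
  · rw [← stepP_comap hs, ← eK] at hQ2; exact hQ2

end Cards

end SkewBrace

namespace SkewBrace

section Soc

universe u
variable {B : Type u} [SkewBrace B]

/-- membership in the socle -/
def IsSoc (x : B) : Prop := (∀ y, lam x y = y) ∧ ∀ y, x + y = y + x

theorem isSoc_iff (x : B) : MemSocQuot (botIdeal B).carrier x ↔ IsSoc x := by
  have h0 : ∀ z : B, z ∈ (botIdeal B).carrier ↔ z = 0 := fun z => Iff.rfl
  simp only [MemSocQuot, MemSocQuotRel, IsSoc, h0, Set.mem_univ, true_imp_iff, true_and]
  refine and_congr (forall_congr' fun y => ?_) (forall_congr' fun y => ?_)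
  · rw [neg_add_eq_zero, eq_comm]
  · rw [neg_add_eq_zero, eq_comm]

theorem lam_zpow_fix {w b : B} (h : lam w b = b) (n : ℤ) : lam (w ^ n) b = b := by
  let S : Subgroup B :=
    { carrier := {a | lam a b = b}
      one_mem' := lam_one b
      mul_mem' := fun {a c} (ha : lam a b = b) (hc : lam c b = b) => by
        show lam (a * c) b = b
        rw [lam_mul, hc, ha]
      inv_mem' := fun {a} (ha : lam a b = b) => by
        show lam a⁻¹ b = b
        conv_lhs => rw [← ha]
        exact lam_inv_lam a b }
  exact S.zpow_mem (show w ∈ S from h) n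

theorem IsSoc.add_eq_mul {x : B} (h : IsSoc x) (y : B) : x + y = x * y := by
  rw [mul_eq_add_lam, h.1]

theorem lam_inv_of_fix {a b : B} (h : lam a b = b) : lam a⁻¹ b = b := by
  simpa using lam_zpow_fix h (-1)

/-- The socle as an additive subgroup. -/
def socSub (B : Type u) [SkewBrace B] : AddSubgroup B where
  carrier := {x | IsSoc x}
  zero_mem' := ⟨lam_zero_left, by simp⟩
  add_mem' := fun {a b} (ha : IsSoc a) (hb : IsSoc b) => by
    refine ⟨fun y => ?_, fun y => ?_⟩
    · rw [ha.add_eq_mul, lam_mul, hb.1, ha.1]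
    · rw [add_assoc, hb.2, ← add_assoc, ha.2, add_assoc]
  neg_mem' := fun {a} (ha : IsSoc a) => by
    have h1 : -a = a⁻¹ := by
      rw [inv_eq_neg_lam, lam_inv_of_fix (ha.1 a)]
    refine ⟨fun y => ?_, fun y => ?_⟩
    · rw [h1]; exact lam_inv_of_fix (ha.1 y)
    · have : AddCommute a y := ha.2 y
      exact this.neg_left

theorem IsSoc.zsmul {x : B} (h : IsSoc x) (n : ℤ) : IsSoc (n • x) :=
  (socSub B).zsmul_mem (show x ∈ socSub B from h) n

theorem IsSoc.pow {x : B} (h : IsSoc x) (n : ℕ) : x ^ n = n • x := by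
  induction n with
  | zero => simp [one_eq_zero]
  | succ n ih => rw [pow_succ', ih, ← h.add_eq_mul, succ_nsmul']

theorem IsSoc.conj {m b : B} (h : IsSoc (lam b m)) : b * m * b⁻¹ = lam b m := by
  rw [mul_inv_eq_iff_eq_mul, ← h.add_eq_mul, mul_eq_add_lam, h.2]

/-- An ideal inside the socle. -/
def mkIdealSoc (S : AddSubgroup B) (hS : ∀ x ∈ S, IsSoc x)
    (hl : ∀ (b : B) {a : B}, a ∈ S → lam b a ∈ S) : BraceIdeal B :=
  mkIdeal (S : Set B) S.zero_mem S.add_mem S.neg_mem hl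
    (fun b a ha => by rw [← (hS a ha).2]; simpa using ha)
    (fun b a ha => by
      rw [IsSoc.conj (hS _ (hl b ha))]; exact hl b ha)

theorem StepG.bot {x : B} {K : BraceIdeal B} (h : StepG x (botIdeal B) K) :
    x ∈ K.carrier ∧ (∀ y ∈ K.carrier, ∃ n : ℤ, y = n • x) ∧ (∀ n : ℤ, n • x = 0 → n = 0) ∧
      ∀ y ∈ K.carrier, IsSoc y := by
  obtain ⟨-, ⟨h1, h2, h3⟩, h4⟩ := h
  refine ⟨h1, fun y hy => ?_, h3, fun y hy => (isSoc_iff y).1 (h4 y hy)⟩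
  obtain ⟨n, hn⟩ := h2 y hy
  exact ⟨n, (neg_add_eq_zero.1 hn).symm⟩

theorem bot_le (K : BraceIdeal B) : (botIdeal B).carrier ⊆ K.carrier := by
  rintro a (rfl : a = 0); exact K.zero_mem

theorem StepG.mk_bot {x : B} {K : BraceIdeal B} (h1 : x ∈ K.carrier)
    (h2 : ∀ y ∈ K.carrier, ∃ n : ℤ, y = n • x) (h3 : ∀ n : ℤ, n • x = 0 → n = 0)
    (h4 : IsSoc x) : StepG x (botIdeal B) K := by
  refine ⟨bot_le K, ⟨h1, fun y hy => ?_, h3⟩, fun y hy => (isSoc_iff y).2 ?_⟩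
  · obtain ⟨n, rfl⟩ := h2 y hy
    exact ⟨n, neg_add_cancel _⟩
  · obtain ⟨n, rfl⟩ := h2 y hy
    exact h4.zsmul n

theorem halve_bot {x : B} {K : BraceIdeal B} (h : StepG x (botIdeal B) K) :
    ∃ C, StepG ((2 : ℤ) • x) (botIdeal B) C ∧ StepP 2 C K := by
  obtain ⟨h1, h2, h3, h4⟩ := h.bot
  have hx2 : ∀ n : ℤ, n • (2 : ℤ) • x = (2 * n) • x := fun n => by
    rw [← mul_zsmul, mul_comm]
  let C : BraceIdeal B := mkIdealSoc (AddSubgroup.zmultiples ((2 : ℤ) • x))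
    (by rintro _ ⟨n, rfl⟩; exact ((h4 x h1).zsmul 2).zsmul n)
    (by
      rintro b _ ⟨n, rfl⟩
      obtain ⟨m, hm⟩ := h2 _ (K.lam_mem b h1)
      refine ⟨n * m, ?_⟩
      simp only [lam_zsmul, hm]
      simp only [← mul_zsmul]
      congr 1; ring)
  refine ⟨C, StepG.mk_bot ⟨1, by simp⟩ ?_ ?_ ((h4 x h1).zsmul 2), ?_, Nat.prime_two, x, h1, ?_,
    ⟨1, by rw [← natCast_zsmul, Nat.cast_ofNat]; exact one_zsmul _⟩, ?_⟩
  · rintro _ ⟨n, rfl⟩; exact ⟨n, rfl⟩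
  · intro n hn; rw [hx2] at hn; have := h3 _ hn; omega
  · rintro _ ⟨n, rfl⟩; exact K.zsmul_mem n (K.zsmul_mem 2 h1)
  · rintro ⟨n, hn⟩
    have hn' : (2 * n) • x = x := by rw [← hx2]; exact hn
    have : (2 * n - 1) • x = 0 := by rw [sub_zsmul, hn']; simp
    have := h3 _ this
    omega
  · intro y hy
    obtain ⟨n, rfl⟩ := h2 y hy
    exact ⟨n, by rw [neg_add_cancel]; exact C.zero_mem⟩

theorem halve {I K : BraceIdeal B} {x : B} (h : StepG x I K) :
    ∃ C, StepG ((2 : ℤ) • x) I C ∧ StepP 2 C K := by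
  obtain ⟨C, _, f, hs, hker⟩ := exists_quot I
  have eI := eq_comap_bot hs I hker
  have eK := eq_comap hs I K hker h.1
  rw [eI, eK, stepG_comap] at h
  obtain ⟨Q, hQ1, hQ2⟩ := halve_bot h
  refine ⟨comap hs Q, ?_, ?_⟩
  · rw [← hs.zsmul, ← stepG_comap hs, ← eI] at hQ1; exact hQ1
  · rw [← stepP_comap hs, ← eK] at hQ2; exact hQ2

theorem comb_add {x y : B} (h : AddCommute x y) (n m n' m' : ℤ) :
    (n • x + m • y) + (n' • x + m' • y) = (n + n') • x + (m + m') • y := by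
  have h1 : m • y + n' • x = n' • x + m • y := ((h.zsmul_right m).zsmul_left n').eq.symm
  rw [add_assoc, ← add_assoc (m • y), h1, add_zsmul, add_zsmul]
  simp only [add_assoc]

theorem comb_smul {x y : B} (h : AddCommute x y) (k n m : ℤ) :
    k • (n • x + m • y) = (k * n) • x + (k * m) • y := by
  rw [((h.zsmul_right m).zsmul_left n).zsmul_add, ← mul_zsmul, ← mul_zsmul]

theorem lam_sub_mem (T : BraceIdeal B) {s : B} (hs : s ∈ T.carrier) (b : B) :
    -b + lam s b ∈ T.carrier := by
  have h1 : s * b = b + lam b (b⁻¹ * s * b) := by rw [← mul_eq_add_lam]; group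
  have h2 := T.mulConj_mem b⁻¹ hs
  rw [inv_inv] at h2
  rw [lam, h1]
  have h3 := T.addConj_mem (-b) (T.neg_mem hs)
  rw [neg_neg] at h3
  have := T.add_mem h3 (T.lam_mem b h2)
  simpa only [add_assoc] using this

theorem addConj_zsmul (b x : B) (n : ℤ) : b + n • x + -b = n • (b + x + -b) := by
  have := map_zsmul (AddAut.addConj b) n x
  simpa only [AddAut.addConj_apply] using this

theorem stepG_lam_fix {J K : BraceIdeal B} {y : B} {p : ℕ} (hodd : Odd p)
    (h1 : StepG y (botIdeal B) J) (h2 : StepP p J K) {k : B} (hk : k ∈ K.carrier) :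
    lam k y = y := by
  obtain ⟨hyJ, hgen, hinf, hsoc⟩ := h1.bot
  obtain ⟨c, hc⟩ := hgen _ (J.lam_mem k hyJ)
  have hpow : ∀ n : ℕ, lam (k ^ n) y = (c ^ n) • y := by
    intro n
    induction n with
    | zero => simp [lam_one]
    | succ n ih => rw [pow_succ, lam_mul, hc, lam_zsmul, ih, ← mul_zsmul]; congr 1; ring
  have h3 := hpow p
  rw [(hsoc _ (stepP_pow_mem h2 hk)).1] at h3
  have h4 : (c ^ p - 1) • y = 0 := by rw [sub_zsmul, ← h3]; simp
  have h5 : c ^ p = 1 := by have := hinf _ h4; omega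
  have hu : IsUnit c := by
    rw [← isUnit_pow_iff h2.2.1.ne_zero, h5]; exact isUnit_one
  rcases Int.isUnit_iff.1 hu with h | h
  · rw [hc, h, one_zsmul]
  · rw [h, hodd.neg_one_pow] at h5
    omega

theorem swapB_torsion {J K : BraceIdeal B} {y t : B} {p : ℕ} (hodd : Odd p)
    (h1 : StepG y (botIdeal B) J) (h2 : StepP p J K)
    (htK : t ∈ K.carrier) (htJ : t ∉ J.carrier) (hpt : (p : ℤ) • t = 0)
    (hform : ∀ k ∈ K.carrier, ∃ n m : ℤ, k = n • t + m • y) :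
    ∃ T, StepP p (botIdeal B) T ∧ StepZ T K := by
  have hfix := fun {k} hk => stepG_lam_fix (k := k) hodd h1 h2 hk
  obtain ⟨hyJ, hgen, hinf, hsoc⟩ := h1.bot
  have hysoc := hsoc y hyJ
  have hp := h2.2.1
  have hp0 : (p : ℤ) ≠ 0 := by exact_mod_cast hp.ne_zero
  have hcomm : AddCommute t y := (hysoc.2 t).symm
  have htors : ∀ m : ℤ, (p : ℤ) • m • y = 0 → m = 0 := by
    intro m hm
    rw [← mul_zsmul] at hm
    have := hinf _ hm
    rcases mul_eq_zero.1 this with h | h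
    · exact absurd h hp0
    · exact h
  have hT : ∀ k, k ∈ AddSubgroup.zmultiples t ↔ k ∈ K.carrier ∧ (p : ℤ) • k = 0 := by
    intro k
    constructor
    · rintro ⟨n, rfl⟩
      refine ⟨K.zsmul_mem n htK, ?_⟩
      show (p : ℤ) • n • t = 0
      rw [zsmul_comm, hpt, zsmul_zero]
    · rintro ⟨hk, hpk⟩
      obtain ⟨n, m, rfl⟩ := hform k hk
      rw [comb_smul hcomm, mul_zsmul', hpt, zsmul_zero, zero_add, mul_zsmul] at hpk
      rw [htors m hpk]
      exact ⟨n, by simp⟩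
  have hlam : ∀ (b : B) {a : B}, a ∈ AddSubgroup.zmultiples t →
      lam b a ∈ AddSubgroup.zmultiples t := by
    intro b a ha
    rw [hT] at *
    exact ⟨K.lam_mem b ha.1, by rw [← lam_zsmul, ha.2, lam_zero]⟩
  have hpw : ∀ s ∈ AddSubgroup.zmultiples t, s ^ p = 1 := by
    intro s hs
    have hn : ∀ n : ℕ, s ^ n ∈ AddSubgroup.zmultiples t := by
      intro n
      induction n with
      | zero => rw [pow_zero, one_eq_zero]; exact AddSubgroup.zero_mem _
      | succ n ih =>
        rw [pow_succ, mul_eq_add_lam]; exact AddSubgroup.add_mem _ ih (hlam _ hs)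
    obtain ⟨m, hm⟩ := hgen _ (stepP_pow_mem h2 ((hT s).1 hs).1)
    have h3 := ((hT _).1 (hn p)).2
    rw [hm] at h3
    rw [hm, htors m h3, zero_zsmul, one_eq_zero]
  have hconj : ∀ (b : B) {a : B}, a ∈ AddSubgroup.zmultiples t →
      b * a * b⁻¹ ∈ AddSubgroup.zmultiples t := by
    intro b s hs
    have hk := K.mulConj_mem b ((hT s).1 hs).1
    have hkp : (b * s * b⁻¹) ^ p = 1 := by rw [conj_pow, hpw s hs]; simp
    obtain ⟨n, m, hnm⟩ := hform _ hk
    rw [hnm] at hkp ⊢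
    have hms := hysoc.zsmul m
    have e1 : n • t + m • y = (m • y) * (n • t) := by rw [← hms.add_eq_mul, hms.2]
    have e2 : n • t + m • y = (n • t) * (m • y) := by
      rw [mul_eq_add_lam, lam_zsmul, hfix (K.zsmul_mem n htK)]
    have hcm : Commute (m • y) (n • t) := e1.symm.trans e2
    rw [e1, hcm.mul_pow, hpw _ ⟨n, rfl⟩, mul_one, hms.pow, one_eq_zero, ← natCast_zsmul] at hkp
    rw [htors m hkp]
    exact ⟨n, by simp⟩
  let T : BraceIdeal B := mkIdeal (AddSubgroup.zmultiples t : Set B) (AddSubgroup.zero_mem _)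
    (AddSubgroup.add_mem _) (AddSubgroup.neg_mem _) hlam
    (fun b a ha => by
      have ha' := (hT a).1 ha
      refine (hT _).2 ⟨K.addConj_mem b ha'.1, ?_⟩
      rw [← addConj_zsmul, ha'.2]; simp) hconj
  have hTmem : ∀ n : ℤ, n • t ∈ T.carrier := fun n => ⟨n, rfl⟩
  refine ⟨T, ⟨bot_le _, hp, t, ⟨1, by simp⟩, ?_, ?_, ?_⟩, y, ?_, ⟨h2.1 hyJ, ?_, ?_⟩, ?_⟩
  · rintro (rfl : t = 0); exact htJ J.zero_mem
  · show p • t = 0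
    rw [← natCast_zsmul]; exact hpt
  · rintro _ ⟨n, rfl⟩; exact ⟨n, neg_add_cancel _⟩
  · intro a ha; exact ((hT a).1 ha).1
  · intro k hk
    obtain ⟨n, m, rfl⟩ := hform k hk
    refine ⟨m, ?_⟩
    rw [← (hysoc.zsmul m).2, neg_add_cancel_left]
    exact hTmem n
  · intro n hn
    exact htors n ((hT _).1 hn).2
  · intro k hk
    obtain ⟨n, m, rfl⟩ := hform k hk
    have hms := hysoc.zsmul m
    refine ⟨trivial, fun b _ => ?_, fun b _ => ?_⟩
    · rw [← hms.2, hms.add_eq_mul, lam_mul, hms.1]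
      exact lam_sub_mem T (hTmem n) b
    · have e : -(b + (n • t + m • y)) + ((n • t + m • y) + b) = -(n • t) + (-b + n • t + b) := by
        rw [add_assoc (n • t), hms.2 b, ← add_assoc b, ← hms.2, ← add_assoc (n • t), ← hms.2]
        simp [add_assoc]
      rw [e]
      have h3 := T.addConj_mem (-b) (hTmem n)
      rw [neg_neg] at h3
      exact T.add_mem (T.neg_mem (hTmem n)) h3

theorem swapB_cyclic {J K : BraceIdeal B} {y z : B} {p : ℕ} (hodd : Odd p)
    (h1 : StepG y (botIdeal B) J) (h2 : StepP p J K)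
    (hzK : z ∈ K.carrier) (hpz : (p : ℤ) • z = y)
    (hform : ∀ k ∈ K.carrier, ∃ n : ℤ, k = n • z) :
    StepG z (botIdeal B) K := by
  have hfix := fun {k} hk => stepG_lam_fix (k := k) hodd h1 h2 hk
  obtain ⟨hyJ, hgen, hinf, hsoc⟩ := h1.bot
  have hysoc := hsoc y hyJ
  have hp := h2.2.1
  have hp0 : (p : ℤ) ≠ 0 := by exact_mod_cast hp.ne_zero
  have hzinf : ∀ n : ℤ, n • z = 0 → n = 0 := by
    intro n hn
    apply hinf
    rw [← hpz, zsmul_comm, hn, zsmul_zero]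
  have hzinj : ∀ n m : ℤ, n • z = m • z → n = m := by
    intro n m h
    have := hzinf (n - m) (by rw [sub_zsmul, h]; simp)
    omega
  have hcancel : ∀ n m : ℤ, (p : ℤ) • n • z = (p : ℤ) • m • z → n = m := by
    intro n m h
    rw [← mul_zsmul, ← mul_zsmul] at h
    exact mul_left_cancel₀ hp0 (hzinj _ _ h)
  have hcen : ∀ b, z + b = b + z := by
    intro b
    obtain ⟨e, he⟩ := hform _ (K.addConj_mem b hzK)
    have h3 := addConj_zsmul b z p
    rw [hpz, he, ← hysoc.2, add_neg_cancel_right] at h3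
    have h4 : (1 : ℤ) = e := by
      apply hcancel; rw [one_zsmul, hpz]; exact h3
    rw [← h4, one_zsmul] at he
    rw [add_neg_eq_iff_eq_add] at he
    exact he.symm
  have hlz : ∀ {k}, k ∈ K.carrier → lam k z = z := by
    intro k hk
    obtain ⟨c, hc⟩ := hform _ (K.lam_mem k hzK)
    have h3 := hfix hk
    rw [← hpz, lam_zsmul, hc] at h3
    have : c = 1 := by apply hcancel; rw [one_zsmul]; exact h3
    rw [hc, this, one_zsmul]
  have hnpow : ∀ n : ℕ, z ^ n = n • z := by
    intro n
    induction n with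
    | zero => simp [one_eq_zero]
    | succ n ih => rw [pow_succ', ih, mul_eq_add_lam, lam_nsmul, hlz hzK, succ_nsmul']
  have hzpow : ∀ n : ℤ, z ^ n = n • z := by
    intro n
    have hinv : ∀ n : ℕ, z ^ (-(n : ℤ)) = (-(n : ℤ)) • z := by
      intro n
      rw [zpow_neg, zpow_natCast, inv_eq_neg_lam, hnpow, lam_nsmul,
        hlz (K.inv_mem (by rw [← natCast_zsmul]; exact K.zsmul_mem _ hzK)), neg_zsmul,
        natCast_zsmul]
    rcases Int.eq_nat_or_neg n with ⟨m, rfl | rfl⟩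
    · rw [zpow_natCast, natCast_zsmul, hnpow]
    · exact hinv m
  have hlam : ∀ b, lam z b = b := by
    intro b
    obtain ⟨δ, hδ⟩ := hform _ (K.lam_mem b hzK)
    obtain ⟨ε, hε⟩ := hform _ (K.mulConj_mem b hzK)
    obtain ⟨ε', hε'⟩ := hform _ (K.mulConj_mem b⁻¹ hzK)
    rw [inv_inv] at hε'
    have hzy : z ^ p = y := by rw [hnpow, ← natCast_zsmul, hpz]
    have h3 : (b * z * b⁻¹) ^ p = lam b y := by
      rw [conj_pow, hzy, IsSoc.conj (hsoc _ (J.lam_mem b hyJ))]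
    have h4 : ε = δ := by
      apply hcancel
      rw [← hδ, ← lam_zsmul, hpz, ← h3, hε, ← hzpow, ← zpow_natCast, ← zpow_mul, hzpow,
        ← mul_zsmul, mul_comm, hzpow]
    subst h4
    have h5 : lam (z ^ ε) b = b := by
      have h6 : b * z = (ε • z) * b := by rw [← hε]; group
      have hc : AddCommute (ε • z) b := (show AddCommute z b from hcen b).zsmul_left ε
      rw [mul_eq_add_lam, mul_eq_add_lam, hδ, ← hc.eq] at h6
      rw [hzpow]
      exact (add_left_cancel h6).symm
    have h7 : (z ^ ε) ^ ε' = z := by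
      rw [hzpow ε, ← hε, conj_zpow, hzpow ε', ← hε']; group
    have := lam_zpow_fix h5 ε'
    rwa [h7] at this
  exact StepG.mk_bot hzK hform hzinf ⟨hlam, hcen⟩

theorem swapB_bot {J K : BraceIdeal B} {p : ℕ} (hodd : Odd p)
    (h1 : StepZ (botIdeal B) J) (h2 : StepP p J K) :
    StepZ (botIdeal B) K ∨ ∃ T, StepP p (botIdeal B) T ∧ StepZ T K := by
  obtain ⟨y, h1⟩ := h1
  obtain ⟨hyJ, hgen, hinf, hsoc⟩ := h1.bot
  have hysoc := hsoc y hyJ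
  have hp := h2.2.1
  obtain ⟨x, hxK, hxJ, hpx, hx⟩ := h2.2.2
  have hyK := h2.1 hyJ
  have hcomm : AddCommute x y := (hysoc.2 x).symm
  obtain ⟨a, ha⟩ := hgen _ hpx
  rw [← natCast_zsmul] at ha
  have hform : ∀ k ∈ K.carrier, ∃ n m : ℤ, k = n • x + m • y := by
    intro k hk
    obtain ⟨n, hn⟩ := hx k hk
    obtain ⟨m, hm⟩ := hgen _ hn
    exact ⟨n, m, by rw [← hm]; simp⟩
  by_cases hdvd : (p : ℤ) ∣ a
  · right
    obtain ⟨b, rfl⟩ := hdvd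
    have ht1 : (1 : ℤ) • x + (-b) • y = x + (-b) • y := by rw [one_zsmul]
    refine swapB_torsion (t := (1 : ℤ) • x + (-b) • y) hodd h1 h2 ?_ ?_ ?_ ?_
    · exact K.add_mem (K.zsmul_mem _ hxK) (K.zsmul_mem _ hyK)
    · intro h
      apply hxJ
      have := J.add_mem h (J.zsmul_mem b hyJ)
      rw [add_assoc, ← add_zsmul] at this
      simpa using this
    · rw [comb_smul hcomm, mul_one, ha, ← add_zsmul]
      ring_nf
      simp
    · intro k hk
      obtain ⟨n, m, rfl⟩ := hform k hk
      refine ⟨n, m + n * b, ?_⟩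
      rw [comb_smul hcomm, add_assoc, ← add_zsmul]
      congr 2 <;> ring
  · left
    have hcop : IsCoprime (p : ℤ) a := by
      rw [Int.isCoprime_iff_gcd_eq_one]
      exact ((Nat.Prime.coprime_iff_not_dvd hp).2 (by rwa [← Int.natCast_dvd]))
    obtain ⟨u, v, huv⟩ := hcop
    have hpz : (p : ℤ) • (v • x + u • y) = y := by
      rw [comb_smul hcomm, mul_zsmul', ha, ← mul_zsmul, ← add_zsmul]
      rw [show v * a + p * u = 1 by rw [← huv]; ring, one_zsmul]
    have haz : a • (v • x + u • y) = x := by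
      rw [comb_smul hcomm, mul_zsmul' y a u, ← ha, ← mul_zsmul, ← add_zsmul]
      rw [show a * v + u * p = 1 by rw [← huv]; ring, one_zsmul]
    refine ⟨v • x + u • y, swapB_cyclic hodd h1 h2
      (K.add_mem (K.zsmul_mem _ hxK) (K.zsmul_mem _ hyK)) hpz ?_⟩
    intro k hk
    obtain ⟨n, m, rfl⟩ := hform k hk
    refine ⟨n * a + m * p, ?_⟩
    rw [add_zsmul, mul_zsmul, mul_zsmul, haz, hpz]

theorem swapB {I J K : BraceIdeal B} {p : ℕ} (hodd : Odd p)
    (h1 : StepZ I J) (h2 : StepP p J K) :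
    StepZ I K ∨ ∃ T, StepP p I T ∧ StepZ T K := by
  obtain ⟨C, _, f, hs, hker⟩ := exists_quot I
  obtain ⟨x, h1x⟩ := id h1
  have hIJ := h1x.1
  clear h1x
  have eI := eq_comap_bot hs I hker
  have eJ := eq_comap hs I J hker hIJ
  have eK := eq_comap hs I K hker (hIJ.trans h2.1)
  rw [eJ, eK, stepP_comap] at h2
  rw [eI, eJ, stepZ_comap] at h1
  rcases swapB_bot hodd h1 h2 with h | ⟨Q, hQ1, hQ2⟩
  · left
    rw [← stepZ_comap hs, ← eI, ← eK] at h; exact h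
  · right
    refine ⟨comap hs Q, ?_, ?_⟩
    · rw [← stepP_comap hs, ← eI] at hQ1; exact hQ1
    · rw [← stepZ_comap hs, ← eK] at hQ2; exact hQ2

end Soc

end SkewBrace

namespace SkewBrace

section Final

universe u
variable {B : Type u} [SkewBrace B]

theorem swapC_bot {J K A : BraceIdeal B} {x : B}
    (h1 : StepP 2 (botIdeal B) J) (h2 : StepG x J K) (h3 : StepG ((2 : ℤ) • (2 : ℤ) • x) J A) :
    ∃ M, StepZ (botIdeal B) M ∧ StepP 2 M A := by
  obtain ⟨-, -, t, htJ, ht0, h2t, hgt⟩ := h1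
  replace ht0 : t ≠ 0 := ht0
  replace h2t : 2 • t = 0 := h2t
  have h2t' : t + t = 0 := by rw [← two_nsmul]; exact h2t
  have h2tz : (2 : ℤ) • t = 0 := by rw [two_zsmul]; exact h2t'
  have hJm : ∀ j ∈ J.carrier, ∃ n : ℤ, j = n • t := by
    intro j hj
    obtain ⟨n, hn⟩ := hgt j hj
    exact ⟨n, (neg_add_eq_zero.1 hn).symm⟩
  have hJ : ∀ j ∈ J.carrier, j = 0 ∨ j = t := by
    intro j hj
    obtain ⟨n, rfl⟩ := hJm j hj
    rcases Int.even_or_odd' n with ⟨k, rfl | rfl⟩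
    · left; rw [mul_zsmul', h2tz, zsmul_zero]
    · right; rw [add_zsmul, mul_zsmul', h2tz, zsmul_zero, one_zsmul, zero_add]
  have htc : ∀ b, t + b = b + t := by
    intro b
    rcases hJ _ (J.addConj_mem b htJ) with h | h
    · rw [add_neg_eq_zero] at h
      exact absurd (add_eq_left.1 h) ht0
    · rw [add_neg_eq_iff_eq_add] at h; exact h.symm
  have htl : ∀ b, lam b t = t := by
    intro b
    rcases hJ _ (J.lam_mem b htJ) with h | h
    · exact absurd (by rw [← lam_inv_lam b t, h, lam_zero]) ht0
    · exact h
  obtain ⟨-, ⟨hxK, hxg, -⟩, hKs⟩ := h2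
  have hkl : ∀ b, lam (x * x) b = b := by
    intro b
    rw [lam_mul]
    rcases hJ _ ((hKs x hxK).2.1 b trivial) with h | h
    · rw [neg_add_eq_zero] at h; rw [← h, ← h]
    · have h' : lam x b = b + t := by rw [← h]; simp
      rw [h', lam_add, h', htl, add_assoc, h2t', add_zero]
  have hxc : ∀ b, (x + x) + b = b + (x + x) := by
    intro b
    rcases hJ _ ((hKs x hxK).2.2 b trivial) with h | h
    · rw [neg_add_eq_zero] at h
      rw [add_assoc, ← h, ← add_assoc, ← h, add_assoc]
    · have h' : x + b = b + x + t := neg_add_eq_iff_eq_add.1 h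
      calc (x + x) + b = x + (x + b) := add_assoc _ _ _
        _ = x + b + (x + t) := by
            have := congrArg (fun z => x + z) h'
            simpa only [add_assoc] using this
        _ = b + x + (t + x) + t := by rw [h']; simp only [add_assoc]
        _ = b + (x + x) + (t + t) := by rw [htc x]; simp only [add_assoc]
        _ = b + (x + x) := by rw [h2t', add_zero]
  have hg4 : (2 : ℤ) • (2 : ℤ) • x = (x + x) + (x + x) := by rw [two_zsmul, two_zsmul]
  have hww : IsSoc (x * x) ∧ x * x + x * x = (x + x) + (x + x) := by
    rcases hJ _ ((hKs x hxK).2.1 x trivial) with h | h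
    · have e : x * x = x + x := by
        rw [neg_add_eq_zero] at h
        rw [mul_eq_add_lam, ← h]
      refine ⟨⟨hkl, fun b => by rw [e]; exact hxc b⟩, by rw [e]⟩
    · have e : x * x = x + x + t := by
        rw [mul_eq_add_lam, add_assoc x x t, ← h]; simp
      refine ⟨⟨hkl, fun b => ?_⟩, ?_⟩
      · rw [e, add_assoc, htc, ← add_assoc, hxc, add_assoc]
      · rw [e, add_assoc (x + x) t, htc, add_assoc (x + x) _ t, h2t',
          add_zero]
  set g := (2 : ℤ) • (2 : ℤ) • x with hgdef
  have hgs : IsSoc g := by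
    rw [hg4, ← hww.2]
    exact (socSub B).add_mem (show x * x ∈ socSub B from hww.1) hww.1
  obtain ⟨hJA, ⟨hgA, hgg, hginf⟩, -⟩ := h3
  have hcomm : AddCommute x t := (htc x).symm
  let M : BraceIdeal B := mkIdealSoc (AddSubgroup.zmultiples g)
    (by rintro _ ⟨n, rfl⟩; exact hgs.zsmul n)
    (by
      rintro b _ ⟨k, rfl⟩
      obtain ⟨n, hn⟩ := hxg _ (K.lam_mem b hxK)
      obtain ⟨m, hm⟩ := hJm _ hn
      have e : lam b x = n • x + m • t := by rw [← hm]; simp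
      have e2 : lam b g = n • g := by
        rw [hgdef, lam_zsmul, lam_zsmul, e, comb_smul hcomm, comb_smul hcomm]
        rw [mul_zsmul' t, h2tz, zsmul_zero, add_zero]
        simp only [← mul_zsmul]
        congr 1; ring
      show lam b (k • g) ∈ _
      rw [lam_zsmul, e2]
      exact AddSubgroup.zsmul_mem (AddSubgroup.zmultiples g) ⟨n, rfl⟩ k)
  have hMg : ∀ n : ℤ, n • g ∈ M.carrier := fun n => ⟨n, rfl⟩
  refine ⟨M, ⟨g, StepG.mk_bot ⟨1, one_zsmul _⟩ ?_ ?_ hgs⟩, ?_, Nat.prime_two, t, hJA htJ, ?_, ?_, ?_⟩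
  · rintro _ ⟨n, rfl⟩; exact ⟨n, rfl⟩
  · intro n hn; exact hginf n (by rw [hn]; exact J.zero_mem)
  · rintro _ ⟨n, rfl⟩; exact A.zsmul_mem n hgA
  · rintro ⟨n, hn⟩
    replace hn : n • g = t := hn
    have := hginf n (by rw [hn]; exact htJ)
    rw [this, zero_zsmul] at hn
    exact ht0 hn.symm
  · rw [h2t]; exact M.zero_mem
  · intro y hy
    obtain ⟨n, hn⟩ := hgg y hy
    obtain ⟨m, hm⟩ := hJm _ hn
    refine ⟨m, ?_⟩
    have e : y = n • g + m • t := by rw [← hm]; simp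
    rw [e, (hgs.zsmul n).2, neg_add_cancel_left]
    exact hMg n

theorem swapC {I J K : BraceIdeal B} (h1 : StepP 2 I J) (h2 : StepZ J K) :
    ∃ M A C, StepZ I M ∧ StepP 2 M A ∧ StepP 2 A C ∧ StepP 2 C K := by
  obtain ⟨x, h2⟩ := h2
  obtain ⟨C, hC, hCK⟩ := halve h2
  obtain ⟨A, hA, hAC⟩ := halve hC
  obtain ⟨Q, _, f, hs, hker⟩ := exists_quot I
  have eI := eq_comap_bot hs I hker
  have eJ := eq_comap hs I J hker h1.1
  have eK := eq_comap hs I K hker (h1.1.trans h2.1)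
  have eA := eq_comap hs I A hker (h1.1.trans hA.1)
  rw [eI, eJ, stepP_comap] at h1
  rw [eJ, eK, stepG_comap] at h2
  rw [eJ, eA, stepG_comap, hs.zsmul, hs.zsmul] at hA
  obtain ⟨M, hM1, hM2⟩ := swapC_bot h1 h2 hA
  refine ⟨comap hs M, A, C, ?_, ?_, hAC, hCK⟩
  · rw [← stepZ_comap hs, ← eI] at hM1; exact hM1
  · rw [← stepP_comap hs, ← eA] at hM2; exact hM2

/-- towers with odd prime factors at least `q`, in decreasing order -/
inductive OT : ℕ → BraceIdeal B → Prop
  | zero (q : ℕ) (J : BraceIdeal B) (h : J.carrier = {0}) : OT q J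
  | step (q p : ℕ) (I J : BraceIdeal B) (h : OT p I) (hs : StepP p I J) (hp : Odd p)
      (hq : q ≤ p) : OT q J

/-- odd towers followed by infinite cyclic factors -/
inductive MT : BraceIdeal B → Prop
  | base (q : ℕ) (J : BraceIdeal B) (h : OT q J) : MT J
  | step (I J : BraceIdeal B) (h : MT I) (hs : StepZ I J) : MT J

/-- the full towers -/
inductive TT : BraceIdeal B → Prop
  | base (J : BraceIdeal B) (h : MT J) : TT J
  | step (I J : BraceIdeal B) (h : TT I) (hs : StepP 2 I J) : TT J

theorem OT.insert {q : ℕ} {J : BraceIdeal B} (h : OT q J) :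
    ∀ {p q' : ℕ} {K : BraceIdeal B}, StepP p J K → Odd p → q' ≤ q → q' ≤ p → OT q' K := by
  induction h with
  | zero q J h =>
    intro p q' K hs hp _ hq'
    exact OT.step q' p J K (OT.zero p J h) hs hp hq'
  | step q r I J h hs hr hqr ih =>
    intro p q' K hs' hp hq hq'
    rcases le_or_gt p r with hpr | hpr
    · exact OT.step q' p J K (OT.step p r I J h hs hr hpr) hs' hp hq'
    · obtain ⟨Q, hQ1, hQ2⟩ := swapA hpr hs hs'
      exact OT.step q' r Q K (ih hQ1 hp le_rfl hpr.le) hQ2 hr (hq.trans hqr)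

theorem MT.insert {J : BraceIdeal B} (h : MT J) :
    ∀ {p : ℕ} {K : BraceIdeal B}, StepP p J K → Odd p → MT K := by
  induction h with
  | base q J h =>
    intro p K hs hp
    exact MT.base 0 K (h.insert hs hp (Nat.zero_le _) (Nat.zero_le _))
  | step I J h hs ih =>
    intro p K hs' hp
    rcases swapB hp hs hs' with h' | ⟨T, hT1, hT2⟩
    · exact MT.step I K h h'
    · exact MT.step T K (ih hT1 hp) hT2

theorem TT.insert_odd {J : BraceIdeal B} (h : TT J) :
    ∀ {p : ℕ} {K : BraceIdeal B}, StepP p J K → Odd p → TT K := by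
  induction h with
  | base J h =>
    intro p K hs hp
    exact TT.base K (h.insert hs hp)
  | step I J h hs ih =>
    intro p K hs' hp
    have h2 : 2 < p := by
      have := hs'.2.1.two_le
      rcases hp with ⟨k, rfl⟩
      omega
    obtain ⟨Q, hQ1, hQ2⟩ := swapA h2 hs hs'
    exact TT.step Q K (ih hQ1 hp) hQ2

theorem TT.insert_Z {J : BraceIdeal B} (h : TT J) :
    ∀ {K : BraceIdeal B}, StepZ J K → TT K := by
  induction h with
  | base J h =>
    intro K hs
    exact TT.base K (MT.step J K h hs)
  | step I J h hs ih =>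
    intro K hs'
    obtain ⟨M, A, C, h1, h2, h3, h4⟩ := swapC hs hs'
    exact TT.step C K (TT.step A C (TT.step M A (ih h1) h2) h3) h4

theorem supersoluble_TT (hB : IsSupersoluble B) :
    ∃ J : BraceIdeal B, J.carrier = Set.univ ∧ TT J := by
  obtain ⟨n, I, h0, hn, hle, hst⟩ := hB
  have key : ∀ i, i ≤ n → TT (I i) := by
    intro i
    induction i with
    | zero => intro _; exact TT.base _ (MT.base 0 _ (OT.zero 0 _ h0))
    | succ i ih =>
      intro hi
      have hT := ih (by omega)
      rcases hst i (by omega) with ⟨⟨x, hx⟩, hs⟩ | ⟨p, hp⟩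
      · exact hT.insert_Z ⟨x, hle i (by omega), hx, hs⟩
      · rcases hp.1.eq_two_or_odd' with rfl | hodd
        · exact TT.step _ _ hT ⟨hle i (by omega), hp⟩
        · exact hT.insert_odd ⟨hle i (by omega), hp⟩ hodd
  exact ⟨I n, hn, key n le_rfl⟩

theorem OT.extract {q : ℕ} {J : BraceIdeal B} (h : OT q J) :
    ∃ (ℓ : ℕ) (I : ℕ → BraceIdeal B) (p : ℕ → ℕ), (I 0).carrier = {0} ∧ I ℓ = J ∧
      (∀ i, i < ℓ → Odd (p i) ∧ StepP (p i) (I i) (I (i + 1))) ∧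
      (∀ i, i + 1 < ℓ → p (i + 1) ≤ p i) ∧ ∀ i, i < ℓ → q ≤ p i := by
  induction h with
  | zero q J h =>
    exact ⟨0, fun _ => J, fun _ => 0, h, rfl, by simp, by simp, by simp⟩
  | step q r I₀ J h hs hr hq ih =>
    obtain ⟨ℓ, I, p, h0, hl, hst, hdec, hge⟩ := ih
    refine ⟨ℓ + 1, fun i => if i ≤ ℓ then I i else J, fun i => if i < ℓ then p i else r,
      by simpa using h0, by simp, fun i hi => ?_, fun i hi => ?_, fun i hi => ?_⟩
    · rcases Nat.lt_succ_iff_lt_or_eq.1 hi with h' | rfl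
      · simpa [h', h'.le, Nat.succ_le_of_lt h'] using hst i h'
      · simpa [hl] using ⟨hr, hs⟩
    · rcases Nat.lt_succ_iff_lt_or_eq.1 hi with h' | h'
      · have h'' : i < ℓ := by omega
        simpa [h', h''] using hdec i h'
      · have h'' : i < ℓ := by omega
        simpa [h', h''] using hge i h''
    · rcases Nat.lt_succ_iff_lt_or_eq.1 hi with h' | rfl
      · simpa [h'] using hq.trans (hge i h')
      · simpa using hq

theorem MT.extract {J : BraceIdeal B} (h : MT J) :
    ∃ (ℓ m : ℕ) (I : ℕ → BraceIdeal B) (p : ℕ → ℕ), (I 0).carrier = {0} ∧ I (ℓ + m) = J ∧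
      (∀ i, i < ℓ → Odd (p i) ∧ StepP (p i) (I i) (I (i + 1))) ∧
      (∀ i, i + 1 < ℓ → p (i + 1) ≤ p i) ∧
      ∀ i, ℓ ≤ i → i < ℓ + m → StepZ (I i) (I (i + 1)) := by
  induction h with
  | base q J h =>
    obtain ⟨ℓ, I, p, h0, hl, hst, hdec, -⟩ := h.extract
    exact ⟨ℓ, 0, I, p, h0, hl, hst, hdec, fun i _ _ => by omega⟩
  | step I₀ J h hs ih =>
    obtain ⟨ℓ, m, I, p, h0, hl, hst, hdec, hz⟩ := ih
    refine ⟨ℓ, m + 1, fun i => if i ≤ ℓ + m then I i else J, p,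
      by simpa using h0, ?_, fun i hi => ?_, hdec, fun i hi1 hi2 => ?_⟩
    · simp only []
      rw [if_neg (by omega)]
    · have h1 : i ≤ ℓ + m := by omega
      have h2 : i + 1 ≤ ℓ + m := by omega
      simpa [h1, h2] using hst i hi
    · have h1 : i ≤ ℓ + m := by omega
      rcases h1.lt_or_eq with h' | rfl
      · have h2 : i + 1 ≤ ℓ + m := by omega
        simpa [h1, h2] using hz i hi1 h'
      · simpa [hl] using hs

theorem TT.extract {J : BraceIdeal B} (h : TT J) :
    ∃ (ℓ m n : ℕ) (I : ℕ → BraceIdeal B) (p : ℕ → ℕ), (I 0).carrier = {0} ∧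
      I (ℓ + m + n) = J ∧
      (∀ i, i < ℓ → Odd (p i) ∧ StepP (p i) (I i) (I (i + 1))) ∧
      (∀ i, i + 1 < ℓ → p (i + 1) ≤ p i) ∧
      (∀ i, ℓ ≤ i → i < ℓ + m → StepZ (I i) (I (i + 1))) ∧
      ∀ i, ℓ + m ≤ i → i < ℓ + m + n → StepP 2 (I i) (I (i + 1)) := by
  induction h with
  | base J h =>
    obtain ⟨ℓ, m, I, p, h0, hl, hst, hdec, hz⟩ := h.extract
    exact ⟨ℓ, m, 0, I, p, h0, hl, hst, hdec, hz, fun i _ _ => by omega⟩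
  | step I₀ J h hs ih =>
    obtain ⟨ℓ, m, n, I, p, h0, hl, hst, hdec, hz, h2⟩ := ih
    refine ⟨ℓ, m, n + 1, fun i => if i ≤ ℓ + m + n then I i else J, p,
      by simpa using h0, ?_, fun i hi => ?_, hdec, fun i hi1 hi2 => ?_, fun i hi1 hi2 => ?_⟩
    · simp only []
      rw [if_neg (by omega)]
    · have h1 : i ≤ ℓ + m + n := by omega
      have h2 : i + 1 ≤ ℓ + m + n := by omega
      simpa [h1, h2] using hst i hi
    · have h1 : i ≤ ℓ + m + n := by omega
      have h2 : i + 1 ≤ ℓ + m + n := by omega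
      simpa [h1, h2] using hz i hi1 hi2
    · have h1 : i ≤ ℓ + m + n := by omega
      rcases h1.lt_or_eq with h' | rfl
      · have h3 : i + 1 ≤ ℓ + m + n := by omega
        simpa [h1, h3] using h2 i hi1 h'
      · simpa [hl] using hs

end Final

end SkewBrace

namespace SkewBrace

/-- **Sylow tower theorem for supersoluble braces.**
A supersoluble brace `B` has a finite chain of ideals
`{0} = I 0 ≤ … ≤ I ℓ ≤ … ≤ I (ℓ+m) ≤ … ≤ I (ℓ+m+n) = B` such that the first `ℓ`
factors have odd prime orders, arranged in decreasing magnitude, the middle `m`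
factors are additively infinite cyclic and contained in the socle of the
corresponding quotient of `B`, and the last `n` factors have order `2`. -/
theorem supersoluble_sylow_tower (B : Type*) [SkewBrace B] (hB : IsSupersoluble B) :
    ∃ (ℓ m n : ℕ) (I : ℕ → BraceIdeal B) (p : ℕ → ℕ),
      (I 0).carrier = {0} ∧ (I (ℓ + m + n)).carrier = Set.univ ∧
      (∀ i, i < ℓ + m + n → (I i).carrier ⊆ (I (i + 1)).carrier) ∧
      (∀ i, i < ℓ →
        Odd (p i) ∧ QuotPrimeOrder (I i).carrier (I (i + 1)).carrier (p i)) ∧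
      (∀ i, i + 1 < ℓ → p (i + 1) ≤ p i) ∧
      (∀ i, ℓ ≤ i → i < ℓ + m →
        QuotAddInfCyclic (I i).carrier (I (i + 1)).carrier ∧
          ∀ x ∈ (I (i + 1)).carrier, MemSocQuot (I i).carrier x) ∧
      (∀ i, ℓ + m ≤ i → i < ℓ + m + n →
        QuotPrimeOrder (I i).carrier (I (i + 1)).carrier 2) := by
  obtain ⟨J, hJ, hT⟩ := supersoluble_TT hB
  obtain ⟨ℓ, m, n, I, p, h0, hl, hst, hdec, hz, h2⟩ := hT.extract
  refine ⟨ℓ, m, n, I, p, h0, by rw [hl]; exact hJ, fun i hi => ?_,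
    fun i hi => ⟨(hst i hi).1, (hst i hi).2.2⟩, hdec, fun i hi1 hi2 => ?_,
    fun i hi1 hi2 => (h2 i hi1 hi2).2⟩
  · by_cases h1 : i < ℓ
    · exact (hst i h1).2.1
    · by_cases h3 : i < ℓ + m
      · obtain ⟨x, hx⟩ := hz i (by omega) h3
        exact hx.1
      · exact (h2 i (by omega) hi).1
  · obtain ⟨x, hx⟩ := hz i hi1 hi2
    exact ⟨⟨x, hx.2.1⟩, hx.2.2⟩

end SkewBrace
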